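/- (Properties of f_4 used in the proof of Lemma B) The polynomial f_4 satisfies: f_4(t) ≤ 0 for all t ∈ [−0.6058, 1/2]; f_4 is strictly decreasing on the interval [−1, −0.6058]; and f_4(−1) > 0. (In particular f_4 belongs to the class Φ*(1/2), with −f_4's smaller negative root t_1 = −t_0 satisfying t_0 > 0.6058.) -/

import Mathlib

/-!
Positivity on an interval `[a, b]` is certified by an expansion in the Bernstein basis: with
`u` and `v` positive multiples of `t - a` and `b - t`, the polynomial is a sum of monomials
`u ^ i * v ^ j` with nonnegative coefficients. For `-f₄` such an expansion exists on each of
`[-17/28, -1/4]`, `[-1/4, -1/12]`, `[-1/12, 1/2]`, whose union contains `[-0.6058, 1/2]`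
(the smallest root of `f₄` in `[-1, 1/2]` is about `-0.608`, so the left endpoint can only be
moved slightly). For the negated derivative a single expansion works on `[-1, -3/5]`, which gives strict
monotonicity.
-/

/-- Musin's polynomial `f₄` of degree nine. -/
noncomputable def f₄ (t : ℝ) : ℝ :=
  (1344 / 25) * t ^ 9 - (2688 / 25) * t ^ 7 + (1764 / 25) * t ^ 5 + (2048 / 125) * t ^ 4
    - (1229 / 125) * t ^ 3 - (516 / 125) * t ^ 2 - (217 / 500) * t - 2 / 125

theorem f₄_nonpos_left {t : ℝ} (h₁ : -17 / 28 ≤ t) (h₂ : t ≤ -1 / 4) : f₄ t ≤ 0 := by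
  obtain ⟨u, hu⟩ : ∃ u, u = 28 * t + 17 := ⟨_, rfl⟩
  obtain ⟨v, hv⟩ : ∃ v, v = -1 - 4 * t := ⟨_, rfl⟩
  have hu0 : 0 ≤ u := by linarith
  have hv0 : 0 ≤ v := by linarith
  have key : f₄ t = -((1 / 512000000000000) *
      (29963224809 * v ^ 9 + 1923257734433 * u * v ^ 8 + 1126102212676 * u ^ 2 * v ^ 7
        + 239355763892 * u ^ 3 * v ^ 6 + 22994956334 * u ^ 4 * v ^ 5 + 1080765262 * u ^ 5 * v ^ 4
        + 54438644 * u ^ 6 * v ^ 3 + 5406468 * u ^ 7 * v ^ 2 + 290481 * u ^ 8 * v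
        + 5337 * u ^ 9)) := by
    rw [hu, hv, f₄]
    ring
  rw [key, neg_nonpos]
  positivity

theorem f₄_nonpos_middle {t : ℝ} (h₁ : -1 / 4 ≤ t) (h₂ : t ≤ -1 / 12) : f₄ t ≤ 0 := by
  obtain ⟨u, hu⟩ : ∃ u, u = 4 * t + 1 := ⟨_, rfl⟩
  obtain ⟨v, hv⟩ : ∃ v, v = -1 - 12 * t := ⟨_, rfl⟩
  have hu0 : 0 ≤ u := by linarith
  have hv0 : 0 ≤ v := by linarith
  have key : f₄ t = -((1 / 262144000) *
      (5337 * v ^ 9 + 153249 * u * v ^ 8 + 1890948 * u ^ 2 * v ^ 7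
        + 12921140 * u ^ 3 * v ^ 6 + 53062606 * u ^ 4 * v ^ 5 + 133723086 * u ^ 5 * v ^ 4
        + 203275572 * u ^ 6 * v ^ 3 + 177680004 * u ^ 7 * v ^ 2 + 85233825 * u ^ 8 * v
        + 23185113 * u ^ 9)) := by
    rw [hu, hv, f₄]
    ring
  rw [key, neg_nonpos]
  positivity

theorem f₄_nonpos_right {t : ℝ} (h₁ : -1 / 12 ≤ t) (h₂ : t ≤ 1 / 2) : f₄ t ≤ 0 := by
  obtain ⟨u, hu⟩ : ∃ u, u = 12 * t + 1 := ⟨_, rfl⟩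
  obtain ⟨v, hv⟩ : ∃ v, v = 1 - 2 * t := ⟨_, rfl⟩
  have hu0 : 0 ≤ u := by linarith
  have hv0 : 0 ≤ v := by linarith
  have key : f₄ t = -((1 / 5764801000) *
      (3312159 * v ^ 9 + 1048617 * u * v ^ 8 + 16955484 * u ^ 2 * v ^ 7
        + 34242348 * u ^ 3 * v ^ 6 + 25699065 * u ^ 4 * v ^ 5 + 9202319 * u ^ 5 * v ^ 4
        + 1637447 * u ^ 6 * v ^ 3 + 135159 * u ^ 7 * v ^ 2 + 4218 * u ^ 8 * v)) := by
    rw [hu, hv, f₄]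
    ring
  rw [key, neg_nonpos]
  positivity

theorem f₄_hasDerivAt (t : ℝ) :
    HasDerivAt f₄ ((12096 / 25) * t ^ 8 - (18816 / 25) * t ^ 6 + (1764 / 5) * t ^ 4
      + (8192 / 125) * t ^ 3 - (3687 / 125) * t ^ 2 - (1032 / 125) * t - 217 / 500) t := by
  have h := (((((((hasDerivAt_pow 9 t).const_mul (1344 / 25)).sub
    ((hasDerivAt_pow 7 t).const_mul (2688 / 25))).add
    ((hasDerivAt_pow 5 t).const_mul (1764 / 25))).add
    ((hasDerivAt_pow 4 t).const_mul (2048 / 125))).sub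
    ((hasDerivAt_pow 3 t).const_mul (1229 / 125))).sub
    ((hasDerivAt_pow 2 t).const_mul (516 / 125))).sub
    ((hasDerivAt_id t).const_mul (217 / 500)) |>.sub_const (2 / 125)
  refine h.congr_deriv ?_
  norm_num
  ring

theorem f₄_deriv_neg {t : ℝ} (h₁ : -1 < t) (h₂ : t < -3 / 5) : deriv f₄ t < 0 := by
  rw [(f₄_hasDerivAt t).deriv]
  obtain ⟨u, hu⟩ : ∃ u, u = t + 1 := ⟨_, rfl⟩
  obtain ⟨v, hv⟩ : ∃ v, v = -3 - 5 * t := ⟨_, rfl⟩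
  have hu0 : 0 < u := by linarith
  have hv0 : 0 < v := by linarith
  have key : (12096 / 25) * t ^ 8 - (18816 / 25) * t ^ 6 + (1764 / 5) * t ^ 4
      + (8192 / 125) * t ^ 3 - (3687 / 125) * t ^ 2 - (1032 / 125) * t - 217 / 500
      = -((1 / 128000) *
      (1605 * v ^ 8 + 582936 * u * v ^ 7 + 10982028 * u ^ 2 * v ^ 6
        + 88206056 * u ^ 3 * v ^ 5 + 383561150 * u ^ 4 * v ^ 4 + 965196200 * u ^ 5 * v ^ 3
        + 1388379340 * u ^ 6 * v ^ 2 + 1035979480 * u ^ 7 * v + 296948005 * u ^ 8)) := by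
    rw [hu, hv]
    ring
  rw [key, neg_lt_zero]
  positivity

/-- Properties of `f₄` used in the proof of Lemma B: `f₄(t) ≤ 0` on `[−0.6058, 1/2]`,
`f₄` is strictly decreasing on `[−1, −0.6058]`, and `f₄(−1) > 0`. (In particular
`f₄ ∈ Φ*(1/2)`, with root `−t₀` satisfying `t₀ > 0.6058`.) -/
theorem f₄_properties :
    (∀ t ∈ Set.Icc (-0.6058 : ℝ) (1 / 2), f₄ t ≤ 0) ∧
    StrictAntiOn f₄ (Set.Icc (-1 : ℝ) (-0.6058)) ∧
    0 < f₄ (-1) := by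
  refine ⟨?_, ?_, ?_⟩
  · rintro t ⟨h₁, h₂⟩
    rcases le_total t (-1 / 4) with h | h
    · exact f₄_nonpos_left (le_trans (by norm_num) h₁) h
    rcases le_total t (-1 / 12) with h' | h'
    · exact f₄_nonpos_middle h h'
    · exact f₄_nonpos_right h' h₂
  · refine strictAntiOn_of_deriv_neg (convex_Icc _ _)
      (fun t _ => (f₄_hasDerivAt t).continuousAt.continuousWithinAt) ?_
    intro t ht
    rw [interior_Icc] at ht
    exact f₄_deriv_neg ht.1 (lt_trans ht.2 (by norm_num))
  · norm_num [f₄]
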